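/- For every starting point x_0 ≥ 0 and every x ∈ C(x_0), the measure ρ satisfies Σ_{w ∈ C(x_0)} ρ({w}) q(w,{x}) = ρ({x}); that is, the restriction of ρ to the essential class C(x_0) is an invariant measure for the process of reflections on C(x_0). -/

import Mathlib

open MeasureTheory ProbabilityTheory Filter
open scoped ENNReal

/-- The essential class `C(x₀) = {kd ± x₀ : k ∈ ℤ} ∩ [0, N]`, where `N = sup supp μ`
(the condition `x ≤ N` being expressed as: `x` is below every upper bound of the
support of `μ`, which is vacuous when `N = ∞`). -/
def essClass (μ : MeasureTheory.Measure ℝ) (d : ℕ) (x₀ : ℝ) : Set ℝ :=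
  {x : ℝ | 0 ≤ x ∧ (∃ k : ℤ, x = k * d + x₀ ∨ x = k * d - x₀) ∧
    ∀ u : ℝ, (∀ n : ℕ, μ {(n : ℝ)} ≠ 0 → (n : ℝ) ≤ u) → x ≤ u}

/-- The `j`-fold convolution power of the atom function `m(k) = μ({k})` of a lattice
measure: `m^{(0)} = δ_0` and `m^{(j+1)}(k) = Σ_{i≤k} m^{(j)}(i) m(k-i)`. -/
noncomputable def convPowFun (m : ℕ → ℝ≥0∞) : ℕ → ℕ → ℝ≥0∞
  | 0 => fun k => if k = 0 then 1 else 0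
  | j + 1 => fun k => ∑ i ∈ Finset.range (k + 1), convPowFun m j i * m (k - i)

/-- The atoms `U({k}) = Σ_{n=0}^∞ μ^{(n)}({k})` of the potential measure of the lattice
measure `μ`. -/
noncomputable def potentialFun (μ : MeasureTheory.Measure ℝ) (k : ℕ) : ℝ≥0∞ :=
  ∑' n : ℕ, convPowFun (fun j : ℕ => μ {(j : ℝ)}) n k

/-- The transition kernel of the process of reflections: `q(0,{x}) = μ({x})` and
`q(w,{x}) = Σ_{k ∈ ℕ₀, k < w} U({k}) μ({w + x - k})` for `w > 0`. -/
noncomputable def reflectionKernel (μ : MeasureTheory.Measure ℝ) (w x : ℝ) : ℝ≥0∞ :=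
  if w = 0 then μ {x}
  else ∑' k : ℕ, if (k : ℝ) < w then potentialFun μ k * μ {w + x - (k : ℝ)} else 0

/-- The measure `ρ`: `ρ({0}) = (1 - μ({0}))/2` and
`ρ({x}) = Σ_{k=1}^∞ (μ({x})/2 + μ((x, x+k)) + μ({x+k})/2) μ({k})` for `x > 0`. -/
noncomputable def rhoFun (μ : MeasureTheory.Measure ℝ) (x : ℝ) : ℝ≥0∞ :=
  if x = 0 then (1 - μ {(0 : ℝ)}) / 2
  else ∑' k : ℕ,
    (μ {x} / 2 + μ (Set.Ioo x (x + ((k : ℝ) + 1))) + μ {x + ((k : ℝ) + 1)} / 2) *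
      μ {((k : ℝ) + 1)}

/-!
Let `ν(w) = μ((w, ∞)) + μ({w}) / 2`. Comparing the tails at `w` and `w + z` gives the Poisson
equation `ρ(w) + ∫ ν(w + z) μ(dz) = ν(w)` for `w ≠ 0`. Iterating it along the increasing walk
`S_n` leaves the remainder `E[ν(w + S_n)]`, which vanishes in the limit because `ν → 0` at infinity
and `S_n → ∞` (quantitatively, `E[2 ^ (-S_n)] = E[2 ^ (-Y_1)] ^ n → 0`; for `μ = δ₀` everything
vanishes). Hence `ν` is the potential of `ρ`: `∑ₖ ρ(v + k) U(k) = ν(v)` for `v > 0`.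

The substitution `v = w - k` turns `∑_w ρ(w) q(w, x)` into
`ρ(0) μ({x}) + ∑_{v > 0} ν(v) μ({x + v})`. By Tonelli applied to two independent steps, this is
`ρ(x)`. Finally, `q(w, x) ≠ 0` forces `w + x` to be a multiple of `d`, and `ρ(w) ≠ 0` forces
`w ≤ N`, so the sum only sees points `w` in the essential class of `x`.
-/

section ConvolutionPowers

open Finset.HasAntidiagonal (antidiagonal mem_antidiagonal)

theorem tsum_sum_antidiagonal {A : Type*} [AddMonoid A] [Finset.HasAntidiagonal A]
    (g : A × A → ℝ≥0∞) :
    ∑' n, ∑ p ∈ antidiagonal n, g p = ∑' (i) (j), g (i, j) := by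
  rw [← ENNReal.tsum_prod', ← Finset.HasAntidiagonal.sigmaAntidiagonalEquivProd.tsum_eq,
    ENNReal.tsum_sigma']
  exact tsum_congr fun n => (Finset.tsum_subtype _ g).symm

variable {m : ℕ → ℝ≥0∞}

theorem tsum_mul_convPowFun_succ (m f : ℕ → ℝ≥0∞) (n : ℕ) :
    ∑' l, f l * convPowFun m (n + 1) l = ∑' k, (∑' i, m i * f (k + i)) * convPowFun m n k := by
  have hsum (l : ℕ) : f l * convPowFun m (n + 1) l =
      ∑ p ∈ antidiagonal l, m p.2 * f (p.1 + p.2) * convPowFun m n p.1 := by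
    simp only [convPowFun]
    rw [← Finset.Nat.sum_antidiagonal_eq_sum_range_succ
      (fun i j => convPowFun m n i * m j), Finset.mul_sum]
    refine Finset.sum_congr rfl fun p hp => ?_
    rw [mem_antidiagonal.mp hp]
    ring
  simp_rw [hsum, tsum_sum_antidiagonal, ENNReal.tsum_mul_right]

theorem tsum_mul_convPowFun_zero (m f : ℕ → ℝ≥0∞) : ∑' k, f k * convPowFun m 0 k = f 0 := by
  simp only [convPowFun, mul_ite, mul_one, mul_zero, tsum_ite_eq]

theorem tsum_pow_mul_convPowFun (m : ℕ → ℝ≥0∞) (s : ℝ≥0∞) (n : ℕ) :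
    ∑' k, s ^ k * convPowFun m n k = (∑' i, m i * s ^ i) ^ n := by
  induction n with
  | zero => rw [tsum_mul_convPowFun_zero, pow_zero, pow_zero]
  | succ n ih =>
    rw [tsum_mul_convPowFun_succ, pow_succ', ← ih, ← ENNReal.tsum_mul_left]
    refine tsum_congr fun k => ?_
    simp_rw [← mul_assoc, ← ENNReal.tsum_mul_right]
    exact tsum_congr fun i => by ring

theorem tsum_convPowFun (m : ℕ → ℝ≥0∞) (n : ℕ) : ∑' k, convPowFun m n k = (∑' i, m i) ^ n := by
  simpa only [one_pow, one_mul, mul_one] using tsum_pow_mul_convPowFun m 1 n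

theorem tsum_mul_pow_lt_one (hm : ∑' i, m i ≤ 1) (h0 : m 0 ≠ 1) {s : ℝ≥0∞} (hs : s < 1) :
    ∑' i, m i * s ^ i < 1 := by
  rw [tsum_eq_zero_add' ENNReal.summable] at hm ⊢
  rw [pow_zero, mul_one]
  have h0_lt : m 0 < 1 := lt_of_le_of_ne (le_self_add.trans hm) h0
  have htail_ne_top : ∑' i, m (i + 1) ≠ ∞ :=
    ne_top_of_le_ne_top ENNReal.one_ne_top (le_add_self.trans hm)
  have hle : ∑' i, m (i + 1) * s ^ (i + 1) ≤ (∑' i, m (i + 1)) * s := by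
    rw [← ENNReal.tsum_mul_right]
    gcongr with i
    exact pow_le_of_le_one zero_le hs.le i.succ_ne_zero
  rcases eq_or_ne (∑' i, m (i + 1)) 0 with htail | htail
  · rw [htail, zero_mul, nonpos_iff_eq_zero] at hle
    rwa [hle, add_zero]
  · calc m 0 + ∑' i, m (i + 1) * s ^ (i + 1)
        ≤ m 0 + (∑' i, m (i + 1)) * s := by gcongr
      _ < m 0 + (∑' i, m (i + 1)) * 1 :=
        ENNReal.add_lt_add_left h0_lt.ne_top (ENNReal.mul_lt_mul_right htail htail_ne_top hs)
      _ ≤ 1 := by rwa [mul_one]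

theorem exists_le_add_mul_pow_of_tendsto_zero {f : ℕ → ℝ≥0∞} {C : ℝ≥0∞} (hfC : ∀ k, f k ≤ C)
    (hf : Tendsto f atTop (nhds 0)) {ε : ℝ≥0∞} (hε : 0 < ε) :
    ∃ K : ℕ, ∀ k, f k ≤ ε + C * 2 ^ K * 2⁻¹ ^ k := by
  obtain ⟨K, hK⟩ := eventually_atTop.mp (ENNReal.tendsto_nhds_zero.mp hf ε hε)
  refine ⟨K, fun k => ?_⟩
  rcases le_total K k with hk | hk
  · exact (hK k hk).trans le_self_add
  · have hone : (1 : ℝ≥0∞) ≤ 2 ^ K * 2⁻¹ ^ k := calc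
      (1 : ℝ≥0∞) = 2 ^ k * 2⁻¹ ^ k := by
        rw [← mul_pow, ENNReal.mul_inv_cancel two_ne_zero ENNReal.ofNat_ne_top, one_pow]
      _ ≤ 2 ^ K * 2⁻¹ ^ k := by gcongr; exact one_le_two
    calc f k ≤ C * 1 := by simpa only [mul_one] using hfC k
      _ ≤ C * (2 ^ K * 2⁻¹ ^ k) := by gcongr
      _ ≤ ε + C * 2 ^ K * 2⁻¹ ^ k := by rw [mul_assoc]; exact le_add_self

theorem tendsto_tsum_mul_convPowFun (hm : ∑' i, m i ≤ 1) (h0 : m 0 ≠ 1) {f : ℕ → ℝ≥0∞}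
    {C : ℝ≥0∞} (hC : C ≠ ∞) (hfC : ∀ k, f k ≤ C) (hf : Tendsto f atTop (nhds 0)) :
    Tendsto (fun n => ∑' k, f k * convPowFun m n k) atTop (nhds 0) := by
  refine ENNReal.tendsto_nhds_zero.mpr fun ε hε => ?_
  obtain ⟨K, hK⟩ := exists_le_add_mul_pow_of_tendsto_zero hfC hf (ENNReal.half_pos hε.ne')
  have hCK : C * 2 ^ K ≠ ∞ := ENNReal.mul_ne_top hC (ENNReal.pow_ne_top ENNReal.ofNat_ne_top)
  have hgeom : Tendsto (fun n => C * 2 ^ K * (∑' i, m i * 2⁻¹ ^ i) ^ n) atTop (nhds 0) := by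
    simpa only [mul_zero] using ENNReal.Tendsto.const_mul
      (ENNReal.tendsto_pow_atTop_nhds_zero_of_lt_one
        (tsum_mul_pow_lt_one hm h0 ENNReal.one_half_lt_one)) (Or.inr hCK)
  filter_upwards [ENNReal.tendsto_nhds_zero.mp hgeom _ (ENNReal.half_pos hε.ne')] with n hn
  calc ∑' k, f k * convPowFun m n k
      ≤ ∑' k, (ε / 2 + C * 2 ^ K * 2⁻¹ ^ k) * convPowFun m n k := by gcongr with k; exact hK k
    _ = ε / 2 * (∑' i, m i) ^ n + C * 2 ^ K * (∑' i, m i * 2⁻¹ ^ i) ^ n := by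
      simp_rw [add_mul, mul_assoc _ _ (convPowFun m n _), ENNReal.tsum_add, ENNReal.tsum_mul_left,
        tsum_convPowFun, tsum_pow_mul_convPowFun]
    _ ≤ ε / 2 * 1 + ε / 2 := by gcongr; exact pow_le_one₀ zero_le hm
    _ = ε := by rw [mul_one, ENNReal.add_halves]

theorem sum_tsum_mul_convPowFun_add {f r : ℕ → ℝ≥0∞}
    (hr : ∀ k, r k + ∑' i, m i * f (k + i) = f k) (n : ℕ) :
    ∑ j ∈ Finset.range n, ∑' k, r k * convPowFun m j k + ∑' k, f k * convPowFun m n k = f 0 := by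
  induction n with
  | zero => rw [Finset.sum_range_zero, zero_add, tsum_mul_convPowFun_zero]
  | succ n ih =>
    rw [Finset.sum_range_succ, tsum_mul_convPowFun_succ, add_assoc, ← ENNReal.tsum_add]
    simp_rw [← add_mul, hr]
    exact ih

theorem tsum_mul_tsum_convPowFun (hm : ∑' i, m i ≤ 1) (h0 : m 0 ≠ 1) {f r : ℕ → ℝ≥0∞}
    {C : ℝ≥0∞} (hC : C ≠ ∞) (hfC : ∀ k, f k ≤ C) (hf : Tendsto f atTop (nhds 0))
    (hr : ∀ k, r k + ∑' i, m i * f (k + i) = f k) :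
    ∑' k, r k * ∑' n, convPowFun m n k = f 0 := by
  have hlim := (ENNReal.tendsto_nat_tsum fun n => ∑' k, r k * convPowFun m n k).add
    (tendsto_tsum_mul_convPowFun hm h0 hC hfC hf)
  simp only [sum_tsum_mul_convPowFun_add hr, add_zero] at hlim
  simp_rw [← ENNReal.tsum_mul_left]
  rw [ENNReal.tsum_comm, tendsto_nhds_unique tendsto_const_nhds hlim]

theorem mem_of_convPowFun_ne_zero {S : AddSubmonoid ℕ} (hS : ∀ k, m k ≠ 0 → k ∈ S) {n k : ℕ}
    (h : convPowFun m n k ≠ 0) : k ∈ S := by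
  induction n generalizing k with
  | zero =>
    obtain rfl : k = 0 := of_not_not fun hk => h (if_neg hk)
    exact S.zero_mem
  | succ n ih =>
    obtain ⟨i, hi, hne⟩ := Finset.exists_ne_zero_of_sum_ne_zero h
    rw [← Nat.add_sub_cancel' (Nat.lt_succ_iff.mp (Finset.mem_range.mp hi))]
    exact S.add_mem (ih (left_ne_zero_of_mul hne)) (hS _ (right_ne_zero_of_mul hne))

end ConvolutionPowers

section SymmetrizedTail

/-- The symmetrized tail `ν(w) = μ((w, ∞)) + μ({w}) / 2`, in which the end point of the tail
counts by half. The measure `ρ` is the charge of which `ν` is the potential. -/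
noncomputable def symmTail (μ : Measure ℝ) (w : ℝ) : ℝ≥0∞ := μ (Set.Ioi w) + μ {w} / 2

theorem symmTail_le (μ : Measure ℝ) (w : ℝ) : symmTail μ w ≤ μ (Set.Ici w) := by
  rw [← Set.Ioi_union_left, measure_union (by simp) (measurableSet_singleton _), symmTail]
  gcongr
  exact ENNReal.half_le_self

theorem measure_Ioo_add_symmTail (μ : Measure ℝ) {a b : ℝ} (h : a < b) :
    μ (Set.Ioo a b) + μ {b} / 2 + symmTail μ b = μ (Set.Ioi a) := by
  rw [← Set.Ioc_union_Ioi_eq_Ioi h.le, measure_union Set.Ioc_disjoint_Ioi_same measurableSet_Ioi,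
    ← Set.Ioo_union_right h, measure_union (by simp) (measurableSet_singleton _), symmTail]
  nth_rw 3 [← ENNReal.add_halves (μ {b})]
  ring

theorem half_add_measure_Ioo_add_symmTail (μ : Measure ℝ) {a b : ℝ} (h : a < b) :
    μ {a} / 2 + μ (Set.Ioo a b) + μ {b} / 2 + symmTail μ b = symmTail μ a := by
  rw [symmTail.eq_1 μ a, ← measure_Ioo_add_symmTail μ h]
  ring

theorem antitone_symmTail (μ : Measure ℝ) : Antitone (symmTail μ) :=
  antitone_iff_forall_lt.mpr fun _ _ h => half_add_measure_Ioo_add_symmTail μ h ▸ le_add_self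

theorem tendsto_symmTail_atTop (μ : Measure ℝ) [IsFiniteMeasure μ] :
    Tendsto (symmTail μ) atTop (nhds 0) := by
  have hIci : Tendsto (fun w => μ (Set.Ici w)) atTop (nhds (μ (⋂ w, Set.Ici w))) :=
    tendsto_measure_iInter_atTop (fun _ => measurableSet_Ici.nullMeasurableSet) antitone_Ici
      ⟨0, measure_ne_top _ _⟩
  have hempty : ⋂ w : ℝ, Set.Ici w = ∅ :=
    Set.iInter_eq_empty_iff.mpr fun z => (exists_gt z).imp fun _ h => h.not_ge
  rw [hempty, measure_empty] at hIci
  exact tendsto_of_tendsto_of_tendsto_of_le_of_le tendsto_const_nhds hIci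
    (fun _ => zero_le) (symmTail_le μ)

theorem setLIntegral_measure_sep_swap {α β : Type*} [MeasurableSpace α] [MeasurableSpace β]
    (μ : Measure α) (ν : Measure β) [SFinite μ] [SFinite ν] {s : Set α} {t : Set β}
    {r : Set (α × β)} (hr : MeasurableSet r) :
    ∫⁻ y in s, ν {z ∈ t | (y, z) ∈ r} ∂μ = ∫⁻ z in t, μ {y ∈ s | (y, z) ∈ r} ∂ν := by
  have hswap := (Measure.prod_apply (μ := μ.restrict s) (ν := ν.restrict t) hr).symm.trans
    (Measure.prod_apply_symm hr)
  simp_rw [Measure.restrict_apply (measurable_prodMk_left hr),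
    Measure.restrict_apply (measurable_prodMk_right hr), Set.inter_comm _ s,
    Set.inter_comm _ t] at hswap
  exact hswap

theorem setLIntegral_measure_Ioi_sub (μ ν : Measure ℝ) [SFinite μ] [SFinite ν] (x : ℝ) :
    ∫⁻ y in Set.Ioi x, ν (Set.Ioi (y - x)) ∂μ =
      ∫⁻ z in Set.Ioi 0, μ (Set.Ioo x (x + z)) ∂ν := by
  have hr : MeasurableSet {p : ℝ × ℝ | p.1 < x + p.2} :=
    measurableSet_lt measurable_fst (measurable_const.add measurable_snd)
  refine (setLIntegral_congr_fun measurableSet_Ioi fun y (hy : x < y) => ?_).trans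
    (setLIntegral_measure_sep_swap μ ν (s := Set.Ioi x) (t := Set.Ioi 0) hr)
  congr 1 with z
  simp only [Set.mem_Ioi, Set.mem_ofPred_eq]
  grind

theorem setLIntegral_measure_singleton_sub (μ ν : Measure ℝ) [SFinite μ] [SFinite ν] (x : ℝ) :
    ∫⁻ y in Set.Ioi x, ν {y - x} ∂μ = ∫⁻ z in Set.Ioi 0, μ {x + z} ∂ν := by
  have hr : MeasurableSet {p : ℝ × ℝ | p.1 = x + p.2} :=
    measurableSet_eq_fun measurable_fst (measurable_const.add measurable_snd)
  convert setLIntegral_measure_sep_swap μ ν (s := Set.Ioi x) (t := Set.Ioi 0) hr using 1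
  · refine setLIntegral_congr_fun measurableSet_Ioi fun y (hy : x < y) => ?_
    congr 1 with z
    simp only [Set.mem_singleton_iff, Set.mem_Ioi, Set.mem_ofPred_eq]
    grind
  · refine setLIntegral_congr_fun measurableSet_Ioi fun z (hz : 0 < z) => ?_
    congr 1 with y
    simp only [Set.mem_singleton_iff, Set.mem_Ioi, Set.mem_ofPred_eq]
    grind

theorem setLIntegral_symmTail_sub (μ : Measure ℝ) [SFinite μ] (x : ℝ) :
    ∫⁻ y in Set.Ioi x, symmTail μ (y - x) ∂μ =
      ∫⁻ z in Set.Ioi 0, (μ (Set.Ioo x (x + z)) + μ {x + z} / 2) ∂μ := by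
  have hleft : Measurable fun y => μ (Set.Ioi (y - x)) :=
    Antitone.measurable fun _ _ h => measure_mono (Set.Ioi_subset_Ioi (by gcongr))
  have hright : Measurable fun z => μ (Set.Ioo x (x + z)) :=
    Monotone.measurable fun _ _ h => measure_mono (Set.Ioo_subset_Ioo_right (by gcongr))
  simp only [symmTail]
  rw [lintegral_add_left hleft, lintegral_add_left hright, setLIntegral_measure_Ioi_sub]
  simp only [div_eq_mul_inv]
  rw [lintegral_mul_const' _ _ (by simp), lintegral_mul_const' _ _ (by simp),
    setLIntegral_measure_singleton_sub]

theorem setLIntegral_Ioi_zero_symmTail (μ : Measure ℝ) [SFinite μ] :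
    ∫⁻ z in Set.Ioi 0, symmTail μ z ∂μ = μ (Set.Ioi 0) * μ (Set.Ioi 0) / 2 := by
  have hsymm := setLIntegral_symmTail_sub μ 0
  simp only [zero_add, sub_zero] at hsymm
  have hsum : ∫⁻ z in Set.Ioi 0, (μ (Set.Ioo 0 z) + μ {z} / 2) ∂μ +
      ∫⁻ z in Set.Ioi 0, symmTail μ z ∂μ = μ (Set.Ioi 0) * μ (Set.Ioi 0) := by
    rw [← lintegral_add_right _ (antitone_symmTail μ).measurable, setLIntegral_congr_fun
      measurableSet_Ioi fun z hz => measure_Ioo_add_symmTail μ hz, setLIntegral_const]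
  rw [← hsum, ← hsymm, ENNReal.add_div, ENNReal.add_halves]

end SymmetrizedTail

section Lattice

theorem lintegral_eq_tsum_of_countable {α : Type*} [MeasurableSpace α]
    [MeasurableSingletonClass α] {μ : Measure α} {s : Set α} (hs : s.Countable) (hμ : μ sᶜ = 0)
    (f : α → ℝ≥0∞) : ∫⁻ a, f a ∂μ = ∑' a, f a * μ {a} := by
  have hsupp : Function.support (fun a => f a * μ {a}) ⊆ s := fun a ha => by_contra fun has =>
    right_ne_zero_of_mul ha (measure_mono_null (Set.singleton_subset_iff.mpr has) hμ)
  calc ∫⁻ a, f a ∂μ = ∫⁻ a in s, f a ∂μ := by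
        rw [Measure.restrict_eq_self_of_ae_mem (mem_ae_iff.mpr hμ)]
    _ = ∑' a : s, f a * μ {(a : α)} := lintegral_countable f hs
    _ = ∑' a, f a * μ {a} := tsum_subtype_eq_of_support_subset hsupp

theorem lintegral_eq_add_setLIntegral_Ioi {μ : Measure ℝ} (hμ : ∀ᵐ y ∂μ, 0 ≤ y)
    (f : ℝ → ℝ≥0∞) : ∫⁻ y, f y ∂μ = f 0 * μ {0} + ∫⁻ y in Set.Ioi 0, f y ∂μ := by
  rw [← lintegral_insert Set.self_notMem_Ioi, Set.Ioi_insert,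
    Measure.restrict_eq_self_of_ae_mem (show ∀ᵐ y ∂μ, y ∈ Set.Ici 0 from hμ)]

variable {μ : Measure ℝ}

theorem exists_natCast_mem_of_measure_ne_zero
    (hlat : μ (Set.range (fun n : ℕ => (n : ℝ)))ᶜ = 0) {s : Set ℝ} (hs : μ s ≠ 0) :
    ∃ n : ℕ, (n : ℝ) ∈ s ∧ μ {(n : ℝ)} ≠ 0 := by
  rw [← measure_inter_conull hlat, ← Set.biUnion_of_singleton (s ∩ _), Ne,
    measure_biUnion_null_iff ((Set.countable_range _).mono Set.inter_subset_right)] at hs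
  push Not at hs
  obtain ⟨_, ⟨hmem, n, rfl⟩, hn⟩ := hs
  exact ⟨n, hmem, hn⟩

theorem ae_nonneg_of_lattice (hlat : μ (Set.range (fun n : ℕ => (n : ℝ)))ᶜ = 0) :
    ∀ᵐ y ∂μ, 0 ≤ y := by
  filter_upwards [mem_ae_iff.mpr hlat]
  rintro _ ⟨n, rfl⟩
  exact n.cast_nonneg

theorem lintegral_eq_tsum_natCast (hlat : μ (Set.range (fun n : ℕ => (n : ℝ)))ᶜ = 0)
    (f : ℝ → ℝ≥0∞) : ∫⁻ y, f y ∂μ = ∑' n : ℕ, f n * μ {(n : ℝ)} := by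
  rw [lintegral_eq_tsum_of_countable (Set.countable_range _) hlat]
  refine (Function.Injective.tsum_eq Nat.cast_injective fun y hy => ?_).symm
  obtain ⟨n, hn, -⟩ := exists_natCast_mem_of_measure_ne_zero hlat (right_ne_zero_of_mul hy)
  exact ⟨n, hn⟩

theorem setLIntegral_Ioi_zero_eq_tsum (hlat : μ (Set.range (fun n : ℕ => (n : ℝ)))ᶜ = 0)
    (f : ℝ → ℝ≥0∞) :
    ∫⁻ y in Set.Ioi 0, f y ∂μ = ∑' k : ℕ, f (k + 1) * μ {(k : ℝ) + 1} := by
  rw [← lintegral_indicator measurableSet_Ioi, lintegral_eq_tsum_natCast hlat,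
    tsum_eq_zero_add' ENNReal.summable, Nat.cast_zero, Set.indicator_of_notMem
    Set.self_notMem_Ioi, zero_mul, zero_add]
  refine tsum_congr fun k => ?_
  rw [Nat.cast_succ, Set.indicator_of_mem (Set.mem_Ioi.mpr k.cast_add_one_pos)]

theorem setLIntegral_Ioi_sub_eq_tsum (hlat : μ (Set.range (fun n : ℕ => (n : ℝ)))ᶜ = 0)
    (f : ℝ → ℝ≥0∞) (x : ℝ) :
    ∫⁻ y in Set.Ioi x, f (y - x) ∂μ = ∑' v : Set.Ioi (0 : ℝ), f v * μ {x + v} := by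
  rw [← lintegral_indicator measurableSet_Ioi,
    lintegral_eq_tsum_of_countable (Set.countable_range _) hlat,
    ← (Equiv.addLeft x).tsum_eq, tsum_subtype (Set.Ioi 0) fun v => f v * μ {x + v}]
  refine tsum_congr fun v => ?_
  simp [Set.indicator_apply]

theorem measure_singleton_zero_add_measure_Ioi_zero [IsProbabilityMeasure μ]
    (hlat : μ (Set.range (fun n : ℕ => (n : ℝ)))ᶜ = 0) : μ {0} + μ (Set.Ioi 0) = 1 := by
  simpa using (lintegral_eq_add_setLIntegral_Ioi (ae_nonneg_of_lattice hlat) 1).symm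

end Lattice

section Reflections

variable {μ : Measure ℝ}

theorem rhoFun_of_ne_zero (hlat : μ (Set.range (fun n : ℕ => (n : ℝ)))ᶜ = 0) {x : ℝ}
    (hx : x ≠ 0) :
    rhoFun μ x = ∫⁻ z in Set.Ioi 0, (μ {x} / 2 + μ (Set.Ioo x (x + z)) + μ {x + z} / 2) ∂μ := by
  rw [setLIntegral_Ioi_zero_eq_tsum hlat, rhoFun, if_neg hx]

theorem rhoFun_zero [IsProbabilityMeasure μ]
    (hlat : μ (Set.range (fun n : ℕ => (n : ℝ)))ᶜ = 0) : rhoFun μ 0 = μ (Set.Ioi 0) / 2 := by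
  rw [rhoFun, if_pos rfl, ← measure_singleton_zero_add_measure_Ioi_zero hlat,
    ENNReal.add_sub_cancel_left (measure_ne_top μ _)]

theorem rhoFun_eq_add_setLIntegral_symmTail [IsProbabilityMeasure μ]
    (hlat : μ (Set.range (fun n : ℕ => (n : ℝ)))ᶜ = 0) (x : ℝ) :
    rhoFun μ x = rhoFun μ 0 * μ {x} + ∫⁻ y in Set.Ioi x, symmTail μ (y - x) ∂μ := by
  rcases eq_or_ne x 0 with rfl | hx
  · simp only [sub_zero]
    rw [setLIntegral_Ioi_zero_symmTail, rhoFun_zero hlat]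
    nth_rw 1 [← mul_one (μ (Set.Ioi 0)), ← measure_singleton_zero_add_measure_Ioi_zero hlat]
    simp only [div_eq_mul_inv]
    ring
  · rw [rhoFun_of_ne_zero hlat hx, setLIntegral_symmTail_sub, rhoFun_zero hlat]
    simp only [add_assoc]
    rw [lintegral_add_left measurable_const, setLIntegral_const]
    simp only [div_eq_mul_inv]
    ring

theorem rhoFun_add_lintegral_symmTail [IsProbabilityMeasure μ]
    (hlat : μ (Set.range (fun n : ℕ => (n : ℝ)))ᶜ = 0) {w : ℝ} (hw : w ≠ 0) :
    rhoFun μ w + ∫⁻ z, symmTail μ (w + z) ∂μ = symmTail μ w := by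
  have hmeas : Measurable fun z => symmTail μ (w + z) :=
    (antitone_symmTail μ).measurable.comp (measurable_id.const_add w)
  have hpos : rhoFun μ w + ∫⁻ z in Set.Ioi 0, symmTail μ (w + z) ∂μ =
      symmTail μ w * μ (Set.Ioi 0) := by
    rw [rhoFun_of_ne_zero hlat hw, ← lintegral_add_right _ hmeas, setLIntegral_congr_fun
      measurableSet_Ioi fun z hz => half_add_measure_Ioo_add_symmTail μ (lt_add_of_pos_right w hz),
      setLIntegral_const]
  rw [lintegral_eq_add_setLIntegral_Ioi (ae_nonneg_of_lattice hlat), add_zero, add_left_comm,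
    hpos, ← mul_add, measure_singleton_zero_add_measure_Ioi_zero hlat, mul_one]

theorem rhoFun_le_symmTail [IsProbabilityMeasure μ]
    (hlat : μ (Set.range (fun n : ℕ => (n : ℝ)))ᶜ = 0) {w : ℝ} (hw : w ≠ 0) :
    rhoFun μ w ≤ symmTail μ w :=
  le_self_add.trans_eq (rhoFun_add_lintegral_symmTail hlat hw)

theorem tsum_rhoFun_mul_potentialFun [IsProbabilityMeasure μ]
    (hlat : μ (Set.range (fun n : ℕ => (n : ℝ)))ᶜ = 0) {v : ℝ} (hv : 0 < v) :
    ∑' k : ℕ, rhoFun μ (v + k) * potentialFun μ k = symmTail μ v := by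
  have hne (k : ℕ) : v + k ≠ 0 := (add_pos_of_pos_of_nonneg hv k.cast_nonneg).ne'
  by_cases h0 : μ {(0 : ℝ)} = 1
  · have htail {w : ℝ} (hw : v ≤ w) : symmTail μ w = 0 := by
      have hIoi : μ (Set.Ioi 0) = 0 := by
        simpa [h0] using measure_singleton_zero_add_measure_Ioi_zero hlat
      exact le_zero_iff.mp ((symmTail_le μ w).trans (measure_mono_null
        (Set.Ici_subset_Ioi.mpr (hv.trans_le hw)) hIoi).le)
    have hrho (k : ℕ) : rhoFun μ (v + k) = 0 := le_zero_iff.mp <|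
      (rhoFun_le_symmTail hlat (hne k)).trans_eq (htail (le_add_of_nonneg_right k.cast_nonneg))
    simp only [hrho, zero_mul, tsum_zero, htail le_rfl]
  · have hmass : ∑' n : ℕ, μ {(n : ℝ)} ≤ 1 := by
      simpa using (lintegral_eq_tsum_natCast hlat 1).ge
    have hpoisson (k : ℕ) : rhoFun μ (v + k) +
        ∑' i : ℕ, μ {(i : ℝ)} * symmTail μ (v + (k + i : ℕ)) = symmTail μ (v + k) := by
      rw [← rhoFun_add_lintegral_symmTail hlat (hne k), lintegral_eq_tsum_natCast hlat]
      simp only [Nat.cast_add, add_assoc, mul_comm]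
    have hlim : Tendsto (fun k : ℕ => symmTail μ (v + k)) atTop (nhds 0) :=
      (tendsto_symmTail_atTop μ).comp
        (tendsto_atTop_add_const_left _ v tendsto_natCast_atTop_atTop)
    simpa [potentialFun] using tsum_mul_tsum_convPowFun (m := fun n : ℕ => μ {(n : ℝ)}) hmass
      (by simpa using h0) ENNReal.one_ne_top (fun k => (symmTail_le μ _).trans prob_le_one)
      hlim hpoisson

theorem tsum_mul_reflectionKernel (μ : Measure ℝ) (g : ℝ → ℝ≥0∞) (x : ℝ) :
    ∑' w : ℝ, g w * reflectionKernel μ w x = g 0 * μ {x} +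
      ∑' v : Set.Ioi (0 : ℝ), (∑' k : ℕ, g (v + k) * potentialFun μ k) * μ {x + v} := by
  have hsplit (w : ℝ) : g w * reflectionKernel μ w x = (if w = 0 then g 0 * μ {x} else 0) +
      ∑' k : ℕ, (Set.Ioi 0).indicator
        (fun v => g (v + k) * potentialFun μ k * μ {x + v}) (w - k) := by
    rw [reflectionKernel]
    split_ifs with hw
    · subst hw
      simp
    · rw [zero_add, ← ENNReal.tsum_mul_left]
      refine tsum_congr fun k => ?_
      simp [Set.indicator_apply, mul_assoc, add_sub_assoc', add_comm x w]
  have hshift (k : ℕ) : ∑' w : ℝ, (Set.Ioi 0).indicator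
      (fun v => g (v + k) * potentialFun μ k * μ {x + v}) (w - k) =
        ∑' v : Set.Ioi (0 : ℝ), g (v + k) * potentialFun μ k * μ {x + v} :=
    ((Equiv.subRight (k : ℝ)).tsum_eq _).trans (tsum_subtype _ _).symm
  simp_rw [hsplit]
  rw [ENNReal.tsum_add, tsum_ite_eq, ENNReal.tsum_comm]
  simp_rw [hshift]
  rw [ENNReal.tsum_comm]
  simp_rw [ENNReal.tsum_mul_right]

theorem rho_invariant_for_reflections_general [IsProbabilityMeasure μ]
    (hlat : μ (Set.range (fun n : ℕ => (n : ℝ)))ᶜ = 0) (x : ℝ) :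
    ∑' w : ℝ, rhoFun μ w * reflectionKernel μ w x = rhoFun μ x := by
  rw [tsum_mul_reflectionKernel, rhoFun_eq_add_setLIntegral_symmTail hlat x,
    setLIntegral_Ioi_sub_eq_tsum hlat (symmTail μ)]
  simp_rw [fun v : Set.Ioi (0 : ℝ) => tsum_rhoFun_mul_potentialFun hlat v.2]

theorem dvd_of_potentialFun_ne_zero {d : ℕ} (hd : ∀ n : ℕ, μ {(n : ℝ)} ≠ 0 → d ∣ n) {k : ℕ}
    (hk : potentialFun μ k ≠ 0) : d ∣ k := by
  obtain ⟨n, hn⟩ := not_forall.mp (mt ENNReal.tsum_eq_zero.mpr hk)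
  have hmem (j : ℕ) : j ∈ AddSubmonoid.multiples d ↔ d ∣ j := by
    simp only [AddSubmonoid.mem_multiples_iff, smul_eq_mul, dvd_def, mul_comm, eq_comm]
  exact (hmem k).mp (mem_of_convPowFun_ne_zero (fun j hj => (hmem j).mpr (hd j hj)) hn)

theorem exists_dvd_add_eq_of_reflectionKernel_ne_zero
    (hlat : μ (Set.range (fun n : ℕ => (n : ℝ)))ᶜ = 0) {d : ℕ}
    (hd : ∀ n : ℕ, μ {(n : ℝ)} ≠ 0 → d ∣ n) {w x : ℝ} (hq : reflectionKernel μ w x ≠ 0) :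
    0 ≤ w ∧ ∃ n : ℕ, d ∣ n ∧ w + x = n := by
  rw [reflectionKernel] at hq
  split_ifs at hq with hw
  · obtain ⟨n, rfl, hn⟩ := exists_natCast_mem_of_measure_ne_zero hlat hq
    exact ⟨hw.ge, n, hd n hn, by rw [hw, zero_add]⟩
  · obtain ⟨k, hk⟩ := not_forall.mp (mt ENNReal.tsum_eq_zero.mpr hq)
    obtain ⟨hkw, hk⟩ := ite_ne_right_iff.mp hk
    obtain ⟨n, hnk, hn⟩ := exists_natCast_mem_of_measure_ne_zero hlat (right_ne_zero_of_mul hk)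
    rw [Set.mem_singleton_iff, eq_sub_iff_add_eq] at hnk
    exact ⟨k.cast_nonneg.trans hkw.le, n + k,
      dvd_add (hd n hn) (dvd_of_potentialFun_ne_zero hd (left_ne_zero_of_mul hk)),
      by rw [Nat.cast_add, hnk]⟩

theorem le_of_rhoFun_ne_zero [IsProbabilityMeasure μ]
    (hlat : μ (Set.range (fun n : ℕ => (n : ℝ)))ᶜ = 0) {u w : ℝ}
    (hu : ∀ n : ℕ, μ {(n : ℝ)} ≠ 0 → (n : ℝ) ≤ u) (hw : w ≠ 0) (hρ : rhoFun μ w ≠ 0) :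
    w ≤ u := by
  have hIci : μ (Set.Ici w) ≠ 0 := fun h =>
    hρ (le_zero_iff.mp ((rhoFun_le_symmTail hlat hw).trans ((symmTail_le μ w).trans h.le)))
  obtain ⟨n, hwn, hn⟩ := exists_natCast_mem_of_measure_ne_zero hlat hIci
  exact (Set.mem_Ici.mp hwn).trans (hu n hn)

theorem mem_essClass_of_rhoFun_mul_reflectionKernel_ne_zero [IsProbabilityMeasure μ]
    (hlat : μ (Set.range (fun n : ℕ => (n : ℝ)))ᶜ = 0) {d : ℕ}
    (hd : ∀ n : ℕ, μ {(n : ℝ)} ≠ 0 → d ∣ n) {x₀ x w : ℝ} (hx : x ∈ essClass μ d x₀)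
    (hw : rhoFun μ w * reflectionKernel μ w x ≠ 0) : w ∈ essClass μ d x₀ := by
  obtain ⟨hx_nonneg, ⟨k, hk⟩, hx_le⟩ := hx
  obtain ⟨hw_nonneg, n, ⟨c, rfl⟩, hn⟩ :=
    exists_dvd_add_eq_of_reflectionKernel_ne_zero hlat hd (right_ne_zero_of_mul hw)
  refine ⟨hw_nonneg, ⟨c - k, ?_⟩, fun u hu => ?_⟩
  · push_cast at hn ⊢
    rcases hk with rfl | rfl
    · right; linear_combination hn
    · left; linear_combination hn
  · rcases eq_or_ne w 0 with rfl | hw0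
    · exact hx_nonneg.trans (hx_le u hu)
    · exact le_of_rhoFun_ne_zero hlat hu hw0 (left_ne_zero_of_mul hw)

end Reflections

/-- In the lattice case, for every starting point `x₀ ≥ 0` and every
`x ∈ C(x₀)`, the measure `ρ` satisfies `Σ_{w ∈ C(x₀)} ρ({w}) q(w,{x}) = ρ({x})`:
the restriction of `ρ` to the essential class `C(x₀)` is an invariant measure for the
process of reflections on `C(x₀)`. -/
theorem rho_invariant_for_reflections
    (μ : Measure ℝ) [IsProbabilityMeasure μ]
    (hlat : μ (Set.range (fun n : ℕ => (n : ℝ)))ᶜ = 0)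
    (hnondeg : μ ≠ Measure.dirac 0)
    (d : ℕ)
    (hd1 : ∀ n : ℕ, μ {(n : ℝ)} ≠ 0 → d ∣ n)
    (hd2 : ∀ e : ℕ, (∀ n : ℕ, μ {(n : ℝ)} ≠ 0 → e ∣ n) → e ∣ d)
    (x₀ : ℝ) (hx₀ : 0 ≤ x₀) (x : ℝ) (hx : x ∈ essClass μ d x₀) :
    ∑' w : essClass μ d x₀, rhoFun μ w * reflectionKernel μ w x = rhoFun μ x := by
  have hsupp : Function.support (fun w => rhoFun μ w * reflectionKernel μ w x) ⊆ essClass μ d x₀ :=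
    fun w hw => mem_essClass_of_rhoFun_mul_reflectionKernel_ne_zero hlat hd1 hx hw
  exact (tsum_subtype_eq_of_support_subset hsupp).trans
    (rho_invariant_for_reflections_general hlat x)
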